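/- arXiv:1406.4619 — 2 statements merged into one kernel-verified Lean document; each statement's English description precedes it below -/
import Mathlib

section
/- Assume h is continuous and strictly positive on ℝⁿ. For δ ≥ 0 and Borel A ⊆ ℝ define the transition kernel P(δ, A) = ∫_{ℝⁿ} 1_A(δ − g(x)) · f*_δ(x) dx. Then for every δ ≥ 0 and every Borel set A ⊆ [0, ∞) of strictly positive Lebesgue measure one has P(δ, A) > 0. -/
/-!
If `g x < δ`, then points with slightly smaller first coordinate still satisfy `g < δ`, so
`{y | y₁ < x₁} ∩ L_δ` has nonempty interior and positive `μ`-measure; hence `f*_δ x > 0` wherever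
`h x > 0` and `g x < δ`. A vanishing integral would therefore force `δ - g x ∉ A ∩ (0, ∞)` for
almost every `x`. Since `g` is a nonzero linear functional, it pushes Lebesgue measure forward to a
positive (infinite) multiple of Lebesgue measure on `ℝ`, so `A ∩ (0, ∞)` would be null.
-/

open MeasureTheory Real Set

/-- The constraint function `g(x) = x₁ cos θ + x₂ sin θ` on `ℝⁿ` with `n = m + 2 ≥ 2`. -/
noncomputable def constraintG (m : ℕ) (θ : ℝ) (x : Fin (m + 2) → ℝ) : ℝ :=
  x 0 * Real.cos θ + x 1 * Real.sin θ

/-- `L_δ = {x ∈ ℝⁿ : g(x) ≤ δ}`. -/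
noncomputable def Lset (m : ℕ) (θ δ : ℝ) : Set (Fin (m + 2) → ℝ) :=
  {x | constraintG m θ x ≤ δ}

/-- The density of the selected step:
`f*_δ(x) = λ h(x) 1_{L_δ}(x) μ(((−∞,x₁)×ℝ^{n−1}) ∩ L_δ)^{λ−1} / μ(L_δ)^λ`. -/
noncomputable def selectedDensity (m : ℕ) (θ : ℝ) (h : (Fin (m + 2) → ℝ) → ℝ)
    (μ : Measure (Fin (m + 2) → ℝ)) (lam : ℕ) (δ : ℝ) (x : Fin (m + 2) → ℝ) : ℝ :=
  (Lset m θ δ).indicator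
    (fun x =>
      (lam : ℝ) * h x * ((μ ({y | y 0 < x 0} ∩ Lset m θ δ)).toReal) ^ (lam - 1)
        / ((μ (Lset m θ δ)).toReal) ^ lam) x

section General

variable {X R : Type*} [MeasurableSpace X] [TopologicalSpace R] [LinearOrder R]

lemma measurable_measure_lt_inter [OrderClosedTopology R] [MeasurableSpace R] [BorelSpace R]
    (μ : Measure X) (f : X → R) (s : Set X) :
    Measurable fun a => μ ({y | f y < a} ∩ s) :=
  Monotone.measurable fun _ _ hab =>
    measure_mono (inter_subset_inter_left s fun _ hy => lt_of_lt_of_le hy hab)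

lemma measure_lt_inter_pos_of_isOpenMap [TopologicalSpace X] [OrderTopology R]
    [DenselyOrdered R] [NoMinOrder R] {μ : Measure X} [μ.IsOpenPosMeasure] {f : X → R}
    (hf : Continuous f) (hf_open : IsOpenMap f) {U : Set X} (hU : IsOpen U) {x : X} (hx : x ∈ U) :
    0 < μ ({y | f y < f x} ∩ U) := by
  obtain ⟨_, hlt, y, hyU, rfl⟩ :=
    Filter.Eventually.exists_lt (hf_open.image_mem_nhds (hU.mem_nhds hx))
  exact ((isOpen_lt hf continuous_const).inter hU).measure_pos μ ⟨y, hlt, hyU⟩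

end General

lemma ae_sub_linearMap_mem_iff {𝕜 E F : Type*} [NontriviallyNormedField 𝕜] [CompleteSpace 𝕜]
    [NormedAddCommGroup E] [NormedSpace 𝕜 E] [LocallyCompactSpace E] [MeasurableSpace E]
    [BorelSpace E] [NormedAddCommGroup F] [NormedSpace 𝕜 F] [MeasurableSpace F] [BorelSpace F]
    (μ : Measure E) [μ.IsAddHaarMeasure] (ν : Measure F) [ν.IsAddHaarMeasure] {L : E →ₗ[𝕜] F}
    (hL : Function.Surjective L) (c : F) {s : Set F} (hs : MeasurableSet s) :
    (∀ᵐ x ∂μ, c - L x ∈ s) ↔ ∀ᵐ y ∂ν, y ∈ s := by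
  have hneg : Function.Surjective (-L) := neg_surjective.comp hL
  have hlinear := ae_comp_linearMap_mem_iff (-L) μ ν hneg (hs.preimage (measurable_const_add c))
  simp only [mem_preimage, LinearMap.neg_apply, ← sub_eq_add_neg] at hlinear
  exact hlinear.trans (eventually_add_left_iff ν c)

/-- The constraint function `g` as a linear functional, which lets Haar measure be pushed forward
along it. -/
noncomputable def constraintFunctional (m : ℕ) (θ : ℝ) : (Fin (m + 2) → ℝ) →ₗ[ℝ] ℝ :=
  cos θ • LinearMap.proj 0 + sin θ • LinearMap.proj 1

section Constraint

variable (m : ℕ) (θ : ℝ)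

lemma coe_constraintFunctional : ⇑(constraintFunctional m θ) = constraintG m θ := by
  ext x
  simp [constraintFunctional, constraintG, mul_comm]

lemma continuous_constraintG : Continuous (constraintG m θ) := by
  unfold constraintG
  fun_prop

lemma surjective_constraintFunctional : Function.Surjective (constraintFunctional m θ) := by
  refine LinearMap.surjective fun hzero => ?_
  have hcos : constraintFunctional m θ (Pi.single 0 1) = cos θ := by simp [constraintFunctional]
  have hsin : constraintFunctional m θ (Pi.single 1 1) = sin θ := by simp [constraintFunctional]
  have hone := cos_sq_add_sin_sq θ
  simp [← hcos, ← hsin, hzero] at hone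

lemma ae_sub_constraintG_mem_iff (δ : ℝ) {s : Set ℝ} (hs : MeasurableSet s) :
    (∀ᵐ x, δ - constraintG m θ x ∈ s) ↔ ∀ᵐ t : ℝ, t ∈ s := by
  simpa only [coe_constraintFunctional] using
    ae_sub_linearMap_mem_iff volume volume (surjective_constraintFunctional m θ) δ hs

lemma measurableSet_Lset (δ : ℝ) : MeasurableSet (Lset m θ δ) :=
  measurableSet_le (continuous_constraintG m θ).measurable measurable_const

end Constraint

section SelectedDensity

variable {m lam : ℕ} {θ δ : ℝ} {h : (Fin (m + 2) → ℝ) → ℝ} {μ : Measure (Fin (m + 2) → ℝ)}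

lemma measure_halfspace_inter_Lset_pos [μ.IsOpenPosMeasure] {x : Fin (m + 2) → ℝ}
    (hx : constraintG m θ x < δ) : 0 < μ ({y | y 0 < x 0} ∩ Lset m θ δ) :=
  (measure_lt_inter_pos_of_isOpenMap (continuous_apply 0) (isOpenMap_eval 0)
      (isOpen_lt (continuous_constraintG m θ) continuous_const) hx).trans_le
    (measure_mono (inter_subset_inter_right _ fun y (hy : constraintG m θ y < δ) => hy.le))

lemma selectedDensity_pos [μ.IsOpenPosMeasure] [IsFiniteMeasure μ] (hlam : lam ≠ 0)
    {x : Fin (m + 2) → ℝ} (hx : constraintG m θ x < δ) (hhx : 0 < h x) :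
    0 < selectedDensity m θ h μ lam δ x := by
  have hnum : 0 < (μ ({y | y 0 < x 0} ∩ Lset m θ δ)).toReal :=
    ENNReal.toReal_pos (measure_halfspace_inter_Lset_pos hx).ne' (measure_ne_top _ _)
  have hden : 0 < (μ (Lset m θ δ)).toReal :=
    hnum.trans_le (measureReal_mono inter_subset_right)
  rw [selectedDensity, indicator_of_mem (show x ∈ Lset m θ δ from hx.le)]
  positivity

lemma aemeasurable_selectedDensity (hh : AEMeasurable h) :
    AEMeasurable (selectedDensity m θ h μ lam δ) := by
  have hlower : Measurable fun x : Fin (m + 2) → ℝ => μ ({y | y 0 < x 0} ∩ Lset m θ δ) :=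
    (measurable_measure_lt_inter μ (fun y => y 0) (Lset m θ δ)).comp (measurable_pi_apply 0)
  exact (((hh.const_mul _).mul (hlower.ennreal_toReal.pow_const _).aemeasurable).div_const
    _).indicator (measurableSet_Lset m θ δ)

lemma aemeasurable_indicator_mul_selectedDensity (hh : AEMeasurable h) {A : Set ℝ}
    (hA : MeasurableSet A) :
    AEMeasurable fun x => A.indicator (1 : ℝ → ENNReal) (δ - constraintG m θ x) *
      ENNReal.ofReal (selectedDensity m θ h μ lam δ x) :=
  ((measurable_one.indicator hA).comp
    ((continuous_constraintG m θ).measurable.const_sub δ)).aemeasurable.mul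
    (aemeasurable_selectedDensity hh).ennreal_ofReal

end SelectedDensity

theorem transition_kernel_positive_general
    {m lam : ℕ} (hlam : lam ≠ 0) (θ : ℝ)
    (h : (Fin (m + 2) → ℝ) → ℝ) (hmeas : AEMeasurable h) (hpos : ∀ᵐ x, 0 < h x)
    (μ : Measure (Fin (m + 2) → ℝ)) [IsFiniteMeasure μ]
    (hμ : μ = volume.withDensity fun x => ENNReal.ofReal (h x))
    (δ : ℝ) {A : Set ℝ} (hA : MeasurableSet A) (hA_pos : 0 < volume (A ∩ Ici 0)) :
    0 < ∫⁻ x, A.indicator (1 : ℝ → ENNReal) (δ - constraintG m θ x) *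
          ENNReal.ofReal (selectedDensity m θ h μ lam δ x) := by
  have hac : volume ≪ μ := hμ ▸ withDensity_absolutelyContinuous' hmeas.ennreal_ofReal
    (hpos.mono fun x hx => (ENNReal.ofReal_pos.2 hx).ne')
  have : μ.IsOpenPosMeasure := hac.isOpenPosMeasure
  refine pos_iff_ne_zero.2 fun hzero => hA_pos.ne' ?_
  have havoid : ∀ᵐ x, δ - constraintG m θ x ∈ (A ∩ Ioi 0)ᶜ := by
    have hae := (lintegral_eq_zero_iff'
      (aemeasurable_indicator_mul_selectedDensity hmeas hA)).1 hzero
    filter_upwards [hae, hpos] with x hx hhx ⟨hxA, hxδ⟩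
    have hsel := selectedDensity_pos (μ := μ) hlam (sub_pos.1 hxδ) hhx
    simp [hxA, hsel.not_ge] at hx
  have hnull : volume (A ∩ Ioi 0) = 0 := compl_mem_ae_iff.1
    ((ae_sub_constraintG_mem_iff m θ δ (hA.inter measurableSet_Ioi).compl).1 havoid)
  rwa [measure_congr ((ae_eq_refl A).inter Ioi_ae_eq_Ici)] at hnull

/-- if the step density `h` is continuous and strictly positive, then the
transition kernel `P(δ, A) = ∫ 1_A(δ − g(x)) f*_δ(x) dx` of the normalized-distance
chain charges every Borel `A ⊆ [0,∞)` of positive Lebesgue measure. -/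
theorem transition_kernel_positive
    {m lam : ℕ} (hlam : 2 ≤ lam) (θ : ℝ) (hθ : θ ∈ Set.Ioo 0 (π / 2))
    (h : (Fin (m + 2) → ℝ) → ℝ) (hcont : Continuous h) (hpos : ∀ x, 0 < h x)
    (μ : Measure (Fin (m + 2) → ℝ)) [IsProbabilityMeasure μ]
    (hμ : μ = volume.withDensity fun x => ENNReal.ofReal (h x)) :
    ∀ δ : ℝ, 0 ≤ δ → ∀ A : Set ℝ, MeasurableSet A → A ⊆ Set.Ici 0 →
      0 < volume A →
      0 < ∫⁻ x, A.indicator (1 : ℝ → ENNReal) (δ - constraintG m θ x) *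
            ENNReal.ofReal (selectedDensity m θ h μ lam δ x) ∂volume := by
  intro δ _ A hA hA_nonneg hA_pos
  exact transition_kernel_positive_general (by omega) θ h hcont.aemeasurable (ae_of_all _ hpos) μ hμ
    δ hA (by rwa [inter_eq_left.2 hA_nonneg])
end

section
/- Let μ be the standard Gaussian measure N(0, I) on ℝⁿ with density h. Then lim_{δ → +∞} ∫_{ℝⁿ} (x₁ cos θ + x₂ sin θ) · f*_δ(x) dx = cos θ · E[N_{λ:λ}], where N_{λ:λ} denotes the maximum of λ i.i.d. standard normal random variables; in particular this limit is strictly positive. -/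
/-! The drift is the `μ`-integral of `g` against the weight
`λ 1_{L_δ}(x) μ({y₁ < x₁} ∩ L_δ)^(λ-1) / μ(L_δ)^λ`, which is bounded once `μ(L_δ)` is close to `1`
and converges to `λ Φ(x₁)^(λ-1)`; dominated convergence applies. That limit is the density of the
maximum of `λ` independent draws: almost surely exactly one coordinate is the strict maximum, and
given its value `t` the others lie below `t` with probability `Φ(t)^(λ-1)`. Hence the `x₁`-term of
`g` contributes `cos θ · E[max]`, while the `x₂`-term is independent of the weight and contributes
`sin θ` times the mean of one coordinate, which vanishes for Gaussian steps. Finally `E[max]`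
strictly exceeds the mean: otherwise two distinct coordinates would both be almost surely equal to
the maximum, whereas they almost surely differ. -/

open MeasureTheory ProbabilityTheory Real Set Filter

section SelectionWeight

variable {Ω : Type*} {mΩ : MeasurableSpace Ω} {μ : Measure Ω} {X : Ω → ℝ}

/-- The density with respect to `μ` of the draw maximising `X` among `lam` independent draws from
`μ` conditioned on `A`, for `X` with continuous distribution. -/
noncomputable def selectionWeight (μ : Measure Ω) (X : Ω → ℝ) (A : Set Ω) (lam : ℕ) : Ω → ℝ :=
  A.indicator fun x => lam * μ.real ({y | X y < X x} ∩ A) ^ (lam - 1) / μ.real A ^ lam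

lemma measurable_selectionWeight [IsFiniteMeasure μ] (hX : Measurable X) {A : Set Ω}
    (hA : MeasurableSet A) (lam : ℕ) : Measurable (selectionWeight μ X A lam) := by
  have hmono : Monotone fun t : ℝ => μ.real ({y | X y < t} ∩ A) := fun s t hst =>
    measureReal_mono (inter_subset_inter_left _ fun y (hy : X y < s) => hy.trans_le hst)
  exact Measurable.indicator
    ((((hmono.measurable.comp hX).pow_const _).const_mul _).div_const _) hA

lemma abs_selectionWeight_le [IsProbabilityMeasure μ] (A : Set Ω) (lam : ℕ) (x : Ω) :
    |selectionWeight μ X A lam x| ≤ lam / μ.real A ^ lam := by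
  rw [← Real.norm_eq_abs]
  refine (norm_indicator_le_norm_self _ x).trans ?_
  rw [Real.norm_of_nonneg (by positivity)]
  gcongr
  exact mul_le_of_le_one_right (by positivity) (pow_le_one₀ measureReal_nonneg measureReal_le_one)

variable {ι : Type*} {l : Filter ι} [l.IsCountablyGenerated] {A : ι → Set Ω}

lemma tendsto_measureReal_inter_of_aecover [IsFiniteMeasure μ] (hA : AECover μ l A) (S : Set Ω) :
    Tendsto (fun i => μ.real (S ∩ A i)) l (nhds (μ.real S)) := by
  have hcover : AECover (μ.restrict S) l A := hA.mono Measure.restrict_le_self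
  have hlim := hcover.lintegral_tendsto_of_countably_generated (f := fun _ => 1) (by fun_prop)
  simp only [lintegral_one, Measure.restrict_apply_univ,
    Measure.restrict_apply (hA.measurableSet _), inter_comm _ S] at hlim
  exact (ENNReal.tendsto_toReal (measure_ne_top μ S)).comp hlim

variable [IsProbabilityMeasure μ]

lemma tendsto_measureReal_of_aecover (hA : AECover μ l A) :
    Tendsto (fun i => μ.real (A i)) l (nhds 1) := by
  simpa using tendsto_measureReal_inter_of_aecover hA univ

lemma tendsto_selectionWeight (hA : AECover μ l A) (lam : ℕ) :
    ∀ᵐ x ∂μ, Tendsto (fun i => selectionWeight μ X (A i) lam x) l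
      (nhds (lam * μ.real {y | X y < X x} ^ (lam - 1))) := by
  filter_upwards [hA.ae_eventually_mem] with x hx
  have hlim := (((tendsto_measureReal_inter_of_aecover hA {y | X y < X x}).pow (lam - 1)).const_mul
    (lam : ℝ)).div ((tendsto_measureReal_of_aecover hA).pow lam) (by simp)
  rw [one_pow, div_one] at hlim
  exact hlim.congr' (hx.mono fun i hi => (indicator_of_mem hi _).symm)

lemma tendsto_integral_mul_selectionWeight (hX : Measurable X) {f : Ω → ℝ} (hf : Integrable f μ)
    (hA : AECover μ l A) (lam : ℕ) :
    Tendsto (fun i => ∫ x, f x * selectionWeight μ X (A i) lam x ∂μ) l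
      (nhds (∫ x, f x * (lam * μ.real {y | X y < X x} ^ (lam - 1)) ∂μ)) := by
  have hbound : ∀ᶠ i in l, (lam : ℝ) / μ.real (A i) ^ lam ≤ lam + 1 := by
    refine Tendsto.eventually_le_const (lt_add_one (lam : ℝ)) ?_
    have hlim := (tendsto_const_nhds (x := (lam : ℝ))).div
      ((tendsto_measureReal_of_aecover hA).pow lam) (by simp)
    rwa [one_pow, div_one] at hlim
  refine tendsto_integral_filter_of_dominated_convergence (fun x => |f x| * (lam + 1))
    (Eventually.of_forall fun i => hf.aestronglyMeasurable.mul
      (measurable_selectionWeight hX (hA.measurableSet i) lam).aestronglyMeasurable)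
    ?_ (hf.abs.mul_const _) ?_
  · filter_upwards [hbound] with i hi
    refine ae_of_all _ fun x => ?_
    rw [norm_mul, Real.norm_eq_abs, Real.norm_eq_abs]
    gcongr
    exact (abs_selectionWeight_le _ _ _).trans hi
  · filter_upwards [tendsto_selectionWeight (X := X) hA lam] with x hx using hx.const_mul _

end SelectionWeight

section Maximum

variable {Ω ι : Type*} {mΩ : MeasurableSpace Ω} {μ : Measure Ω} [Finite ι] {X : ι → Ω → ℝ}

lemma integrable_ciSup (hX : ∀ i, Integrable (X i) μ) : Integrable (fun ω => ⨆ i, X i ω) μ := by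
  have := Fintype.ofFinite ι
  refine Integrable.mono' (integrable_finsetSum Finset.univ fun i _ => (hX i).abs)
    (AEMeasurable.iSup fun i => (hX i).aemeasurable).aestronglyMeasurable (ae_of_all _ fun ω => ?_)
  rcases isEmpty_or_nonempty ι with _ | _
  · simp [Real.iSup_of_isEmpty]
  · obtain ⟨i, hi⟩ := exists_eq_ciSup_of_finite (f := fun i => X i ω)
    rw [← hi, Real.norm_eq_abs]
    exact Finset.single_le_sum (f := fun i => |X i ω|) (fun j _ => abs_nonneg _)
      (Finset.mem_univ i)

lemma integral_lt_integral_ciSup (hX : ∀ i, Integrable (X i) μ) {i j : ι}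
    (hint : ∫ ω, X i ω ∂μ = ∫ ω, X j ω ∂μ) (hne : ¬ X i =ᵐ[μ] X j) :
    ∫ ω, X i ω ∂μ < ∫ ω, ⨆ i, X i ω ∂μ := by
  have hle : ∀ k ω, X k ω ≤ ⨆ i, X i ω := fun k ω =>
    le_ciSup (f := fun i => X i ω) (Set.finite_range _).bddAbove k
  have heq : ∀ k, ∫ ω, X k ω ∂μ = ∫ ω, ⨆ i, X i ω ∂μ → X k =ᵐ[μ] fun ω => ⨆ i, X i ω := fun k =>
    (integral_eq_iff_of_ae_le (hX k) (integrable_ciSup hX) (ae_of_all _ (hle k))).1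
  refine (integral_mono (hX i) (integrable_ciSup hX) (hle i)).lt_of_ne fun h => hne ?_
  exact (heq i h).trans (heq j (hint.symm.trans h)).symm

end Maximum

lemma ae_ne_of_indepFun {Ω β : Type*} {mΩ : MeasurableSpace Ω} {mβ : MeasurableSpace β}
    [MeasurableEq β] {μ : Measure Ω} [IsFiniteMeasure μ] {X Y : Ω → β} (hX : AEMeasurable X μ)
    (hY : AEMeasurable Y μ) (hXY : IndepFun X Y μ) [NullSingletonClass (μ.map Y)] :
    ∀ᵐ ω ∂μ, X ω ≠ Y ω := by
  refine ae_of_ae_map (p := fun z : β × β => z.1 ≠ z.2) (hX.prodMk hY) ?_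
  rw [(indepFun_iff_map_prod_eq_prod_map_map hX hY).1 hXY]
  refine Measure.measure_prod_null_of_ae_null ?_ (ae_of_all _ fun x => ?_)
  · exact measurableSet_diagonal.compl.compl
  · simp [compl_ofPred, preimage_ofPred_eq]

lemma ae_injective_pi {ι β : Type*} [Fintype ι] {mβ : MeasurableSpace β} [MeasurableEq β]
    (γ : Measure β) [IsProbabilityMeasure γ] [NullSingletonClass γ] :
    ∀ᵐ z ∂Measure.pi fun _ : ι => γ, Function.Injective z := by
  have hne (i j : ι) (hij : i ≠ j) : ∀ᵐ z ∂Measure.pi fun _ : ι => γ, z i ≠ z j := by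
    have : NullSingletonClass ((Measure.pi fun _ : ι => γ).map fun z => z j) := by
      rwa [(measurePreserving_eval (fun _ : ι => γ) j).map_eq]
    exact ae_ne_of_indepFun (measurable_pi_apply i).aemeasurable
      (measurable_pi_apply j).aemeasurable
      ((iIndepFun_pi (X := fun _ : ι => (id : β → β)) fun _ => aemeasurable_id).indepFun hij)
  simp only [Function.Injective, ae_all_iff]
  exact fun i j => (em (i = j)).elim (fun h => ae_of_all _ fun _ _ => h)
    fun h => (hne i j h).mono fun z hz heq => (hz heq).elim

section IIDMaximum

variable (γ : Measure ℝ)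

/-- The event that coordinate `i` strictly exceeds all the others. -/
def strictMaxAt {ι : Type*} (i : ι) : Set (ι → ℝ) :=
  {z | ∀ j, j ≠ i → z j < z i}

/-- The density with respect to `γ` of the maximum of `n` independent draws from an atomless `γ`. -/
noncomputable def maxDensity (n : ℕ) (t : ℝ) : ℝ :=
  n * γ.real (Iio t) ^ (n - 1)

lemma maxDensity_nonneg (n : ℕ) (t : ℝ) : 0 ≤ maxDensity γ n t := by
  unfold maxDensity
  positivity

lemma measurable_maxDensity [IsFiniteMeasure γ] (n : ℕ) : Measurable (maxDensity γ n) := by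
  have hmono : Monotone fun t : ℝ => γ.real (Iio t) := fun s t hst =>
    measureReal_mono (Iio_subset_Iio hst)
  exact (hmono.measurable.pow_const _).const_mul _

lemma measurableSet_strictMaxAt {ι : Type*} [Countable ι] (i : ι) :
    MeasurableSet (strictMaxAt i) := by
  simp only [strictMaxAt, ofPred_forall]
  exact .iInter fun j => .iInter fun _ => measurableSet_lt (by fun_prop) (by fun_prop)

lemma pairwise_disjoint_strictMaxAt {ι : Type*} :
    Pairwise (Function.onFun Disjoint (strictMaxAt : ι → Set (ι → ℝ))) :=
  fun i j hij => Set.disjoint_left.2 fun _ hi hj => (hi j hij.symm).asymm (hj i hij)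

lemma iSup_eq_of_mem_strictMaxAt {ι : Type*} [Finite ι] {i : ι} {z : ι → ℝ}
    (hz : z ∈ strictMaxAt i) : ⨆ j, z j = z i := by
  have : Nonempty ι := ⟨i⟩
  refine le_antisymm (ciSup_le fun j => ?_) (le_ciSup (Set.finite_range z).bddAbove i)
  obtain rfl | hj := eq_or_ne j i
  · exact le_rfl
  · exact (hz j hj).le

lemma exists_mem_strictMaxAt {ι : Type*} [Finite ι] [Nonempty ι] {z : ι → ℝ}
    (hz : Function.Injective z) : ∃ i, z ∈ strictMaxAt i := by
  obtain ⟨i, hi⟩ := Finite.exists_max z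
  exact ⟨i, fun j hj => (hi j).lt_of_ne (hz.ne hj)⟩

variable {k : ℕ}

lemma pi_strictMaxAt_inter_preimage_eval [SigmaFinite γ] (i : Fin (k + 1)) {s : Set ℝ}
    (hs : MeasurableSet s) :
    Measure.pi (fun _ => γ) (strictMaxAt i ∩ Function.eval i ⁻¹' s) =
      ∫⁻ t in s, γ (Iio t) ^ k ∂γ := by
  let T : Set (ℝ × (Fin k → ℝ)) := {p | ∀ j, p.2 j < p.1} ∩ Prod.fst ⁻¹' s
  have hT : MeasurableSet T := by
    refine .inter ?_ (measurable_fst hs)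
    simp only [ofPred_forall]
    exact .iInter fun j => measurableSet_lt (by fun_prop) measurable_fst
  have hpreimage : MeasurableEquiv.piFinSuccAbove (fun _ => ℝ) i ⁻¹' T =
      strictMaxAt i ∩ Function.eval i ⁻¹' s := by
    ext z
    simp [T, strictMaxAt, Fin.forall_iff_succAbove i, Fin.removeNth]
  have hslice (t : ℝ) : Measure.pi (fun _ : Fin k => γ) (Prod.mk t ⁻¹' T) =
      s.indicator (fun t => γ (Iio t) ^ k) t := by
    by_cases ht : t ∈ s
    · have : Prod.mk t ⁻¹' T = univ.pi fun _ => Iio t := by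
        ext y
        simp [T, ht]
      simp [this, ht]
    · have : Prod.mk t ⁻¹' T = ∅ := by
        ext y
        simp [T, ht]
      simp [this, ht]
  rw [← hpreimage, (measurePreserving_piFinSuccAbove (fun _ => γ) i).measure_preimage_equiv,
    Measure.prod_apply hT, lintegral_congr hslice, lintegral_indicator hs]

variable [IsProbabilityMeasure γ]

lemma maxDensity_le (n : ℕ) (t : ℝ) : maxDensity γ n t ≤ n :=
  mul_le_of_le_one_right n.cast_nonneg (pow_le_one₀ measureReal_nonneg measureReal_le_one)

lemma map_iSup_pi [NullSingletonClass γ] :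
    (Measure.pi fun _ : Fin (k + 1) => γ).map (fun z => ⨆ i, z i) =
      γ.withDensity fun t => ENNReal.ofReal (maxDensity γ (k + 1) t) := by
  refine Measure.ext fun s hs => ?_
  have hsplit : (fun z : Fin (k + 1) → ℝ => ⨆ i, z i) ⁻¹' s =ᵐ[Measure.pi fun _ => γ]
      ⋃ i, strictMaxAt i ∩ Function.eval i ⁻¹' s := by
    refine eventuallyEq_set.2 ((ae_injective_pi γ).mono fun z hz => ⟨fun h => ?_, fun h => ?_⟩)
    · obtain ⟨i, hi⟩ := exists_mem_strictMaxAt hz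
      rw [mem_preimage, iSup_eq_of_mem_strictMaxAt hi] at h
      exact mem_iUnion.2 ⟨i, hi, h⟩
    · obtain ⟨i, hi, his⟩ := mem_iUnion.1 h
      rwa [mem_preimage, iSup_eq_of_mem_strictMaxAt hi]
  calc (Measure.pi fun _ => γ).map (fun z => ⨆ i, z i) s
      = Measure.pi (fun _ => γ) (⋃ i, strictMaxAt i ∩ Function.eval i ⁻¹' s) := by
        rw [Measure.map_apply (.iSup measurable_pi_apply) hs, measure_congr hsplit]
    _ = ∑ i, Measure.pi (fun _ => γ) (strictMaxAt i ∩ Function.eval i ⁻¹' s) := by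
        rw [measure_iUnion (fun i j hij => (pairwise_disjoint_strictMaxAt hij).mono
          inter_subset_left inter_subset_left) fun i => (measurableSet_strictMaxAt i).inter
          (measurable_pi_apply i hs), tsum_fintype]
    _ = (k + 1 : ℕ) * ∫⁻ t in s, γ (Iio t) ^ k ∂γ := by
        simp [pi_strictMaxAt_inter_preimage_eval γ _ hs]
    _ = γ.withDensity (fun t => ENNReal.ofReal (maxDensity γ (k + 1) t)) s := by
        rw [withDensity_apply _ hs, ← lintegral_const_mul' _ _ (by finiteness)]
        simp only [maxDensity, ENNReal.ofReal_mul (Nat.cast_nonneg _), ENNReal.ofReal_natCast,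
          ENNReal.ofReal_pow measureReal_nonneg, ofReal_measureReal (measure_ne_top γ _),
          add_tsub_cancel_right]

lemma integral_comp_iSup_pi [NullSingletonClass γ] {f : ℝ → ℝ} (hf : Measurable f) :
    ∫ z : Fin (k + 1) → ℝ, f (⨆ i, z i) ∂Measure.pi (fun _ => γ) =
      ∫ t, f t * maxDensity γ (k + 1) t ∂γ := by
  have hmax : Measurable fun z : Fin (k + 1) → ℝ => ⨆ i, z i := .iSup measurable_pi_apply
  rw [← integral_map hmax.aemeasurable hf.aestronglyMeasurable, map_iSup_pi,
    integral_withDensity_eq_integral_toReal_smul (measurable_maxDensity γ _).ennreal_ofReal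
      (ae_of_all _ fun t => ENNReal.ofReal_lt_top)]
  simp only [ENNReal.toReal_ofReal (maxDensity_nonneg γ _ _), smul_eq_mul, mul_comm]

lemma integral_maxDensity [NullSingletonClass γ] : ∫ t, maxDensity γ (k + 1) t ∂γ = 1 := by
  simpa using (integral_comp_iSup_pi γ (k := k) (f := fun _ => 1) measurable_const).symm

lemma integral_lt_integral_iSup_pi [NullSingletonClass γ] (hγ : Integrable id γ) {n : ℕ}
    (hn : 2 ≤ n) :
    ∫ t, t ∂γ < ∫ z : Fin n → ℝ, ⨆ i, z i ∂Measure.pi (fun _ => γ) := by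
  have : Nontrivial (Fin n) := Fin.nontrivial_iff_two_le.2 hn
  obtain ⟨i, j, hij⟩ := exists_pair_ne (Fin n)
  rw [← integral_eval (μ := fun _ : Fin n => γ) (i := i)]
  refine integral_lt_integral_ciSup (X := fun i (z : Fin n → ℝ) => z i) (j := j)
    (fun i => integrable_eval hγ) (by simp only [integral_eval]) fun heq => ?_
  obtain ⟨z, hz, hinj⟩ := (heq.and (ae_injective_pi γ)).exists
  exact hij (hinj hz)

end IIDMaximum

lemma pi_withDensity_ofReal {ι : Type*} [Fintype ι] {α : ι → Type*}
    {mα : ∀ i, MeasurableSpace (α i)} {μ : ∀ i, Measure (α i)} [∀ i, SigmaFinite (μ i)]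
    {f : ∀ i, α i → ℝ} (hf : ∀ i, Integrable (f i) (μ i)) (hf_nonneg : ∀ i t, 0 ≤ f i t) :
    Measure.pi (fun i => (μ i).withDensity fun t => ENNReal.ofReal (f i t)) =
      (Measure.pi μ).withDensity fun x => ENNReal.ofReal (∏ i, f i (x i)) := by
  have (i : ι) : IsFiniteMeasure ((μ i).withDensity fun t => ENNReal.ofReal (f i t)) :=
    isFiniteMeasure_withDensity_ofReal (hf i).2
  refine Measure.pi_eq fun s hs => ?_
  rw [withDensity_apply _ (MeasurableSet.univ_pi hs), Measure.restrict_pi_pi,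
    ← ofReal_integral_eq_lintegral_ofReal (Integrable.fintype_prod_dep fun i => (hf i).restrict)
      (ae_of_all _ fun x => Finset.prod_nonneg fun i _ => hf_nonneg i (x i)),
    integral_fintype_prod_eq_prod (fun i => f i),
    ENNReal.ofReal_prod_of_nonneg fun i _ => integral_nonneg (hf_nonneg i)]
  refine Finset.prod_congr rfl fun i _ => ?_
  rw [withDensity_apply _ (hs i), ofReal_integral_eq_lintegral_ofReal (hf i).restrict
    (ae_of_all _ (hf_nonneg i))]

lemma aecover_Lset (m : ℕ) (θ : ℝ) (μ : Measure (Fin (m + 2) → ℝ)) :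
    AECover μ atTop (Lset m θ) where
  ae_eventually_mem := ae_of_all _ fun x => eventually_ge_atTop (constraintG m θ x)
  measurableSet δ := by
    refine measurableSet_le ?_ measurable_const
    unfold constraintG
    fun_prop

lemma selectedDensity_eq_mul_selectionWeight (m : ℕ) (θ : ℝ) (h : (Fin (m + 2) → ℝ) → ℝ)
    (μ : Measure (Fin (m + 2) → ℝ)) (lam : ℕ) (δ : ℝ) (x : Fin (m + 2) → ℝ) :
    selectedDensity m θ h μ lam δ x =
      h x * selectionWeight μ (fun y => y 0) (Lset m θ δ) lam x := by
  rw [selectedDensity, selectionWeight, ← indicator_mul_right]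
  simp only [measureReal_def]
  congr! 2
  ring

lemma tendsto_integral_constraintG_mul_selectedDensity {m : ℕ} {θ : ℝ}
    {h : (Fin (m + 2) → ℝ) → ℝ} (hmeas : Measurable h) (h_nonneg : ∀ x, 0 ≤ h x)
    {μ : Measure (Fin (m + 2) → ℝ)} [IsProbabilityMeasure μ]
    (hμ : μ = volume.withDensity fun x => ENNReal.ofReal (h x))
    (hg : Integrable (constraintG m θ) μ) (lam : ℕ) :
    Tendsto (fun δ => ∫ x, constraintG m θ x * selectedDensity m θ h μ lam δ x) atTop
      (nhds (∫ x, constraintG m θ x * (lam * μ.real {y | y 0 < x 0} ^ (lam - 1)) ∂μ)) := by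
  refine (tendsto_integral_mul_selectionWeight (measurable_pi_apply 0) hg (aecover_Lset m θ μ)
    lam).congr fun δ => ?_
  conv_lhs => rw [hμ]
  rw [integral_withDensity_eq_integral_toReal_smul hmeas.ennreal_ofReal
    (ae_of_all _ fun x => ENNReal.ofReal_lt_top), ← hμ]
  refine integral_congr_ae (ae_of_all _ fun x => ?_)
  simp only [ENNReal.toReal_ofReal (h_nonneg x), smul_eq_mul,
    selectedDensity_eq_mul_selectionWeight]
  ring

lemma measureReal_pi_eval_lt {ι : Type*} [Fintype ι] (γ : Measure ℝ) [IsProbabilityMeasure γ]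
    (i : ι) (t : ℝ) :
    (Measure.pi fun _ : ι => γ).real {y | y i < t} = γ.real (Iio t) :=
  (measurePreserving_eval (fun _ : ι => γ) i).measureReal_preimage
    measurableSet_Iio.nullMeasurableSet

section IIDCoordinates

variable {γ : Measure ℝ} [IsProbabilityMeasure γ] (hγ : Integrable id γ)

include hγ

lemma integrable_constraintG_pi (m : ℕ) (θ : ℝ) :
    Integrable (constraintG m θ) (Measure.pi fun _ => γ) :=
  ((integrable_eval hγ).mul_const _).add ((integrable_eval hγ).mul_const _)

lemma integral_constraintG_mul_maxDensity [NullSingletonClass γ] (m k : ℕ) (θ : ℝ) :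
    ∫ x, constraintG m θ x * maxDensity γ (k + 1) (x 0) ∂Measure.pi (fun _ => γ) =
      cos θ * ∫ z : Fin (k + 1) → ℝ, ⨆ i, z i ∂Measure.pi (fun _ => γ) + sin θ * ∫ t, t ∂γ := by
  set w := maxDensity γ (k + 1)
  have hw : Measurable w := measurable_maxDensity γ _
  have hint (i : Fin (m + 2)) : Integrable (fun x => x i * w (x 0)) (Measure.pi fun _ => γ) := by
    refine (integrable_eval hγ).mul_bdd (c := (k + 1 : ℕ))
      (hw.comp (measurable_pi_apply 0)).aestronglyMeasurable (ae_of_all _ fun x => ?_)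
    rw [Real.norm_of_nonneg (maxDensity_nonneg γ _ _)]
    exact maxDensity_le γ _ _
  have h0 : ∫ x : Fin (m + 2) → ℝ, x 0 * w (x 0) ∂Measure.pi (fun _ => γ) =
      ∫ z : Fin (k + 1) → ℝ, ⨆ i, z i ∂Measure.pi (fun _ => γ) := by
    rw [integral_comp_eval (μ := fun _ : Fin (m + 2) => γ) (i := 0) (f := fun t => t * w t)
      (measurable_id.mul hw).aestronglyMeasurable]
    exact (integral_comp_iSup_pi γ measurable_id).symm
  have h1 : ∫ x : Fin (m + 2) → ℝ, x 1 * w (x 0) ∂Measure.pi (fun _ => γ) = ∫ t, t ∂γ := by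
    have hindep : IndepFun (fun x => x 1) (fun x => w (x 0))
        (Measure.pi fun _ : Fin (m + 2) => γ) :=
      ((iIndepFun_pi (X := fun _ : Fin (m + 2) => (id : ℝ → ℝ)) fun _ => aemeasurable_id).indepFun
        (i := 1) (j := 0) (by simp)).comp measurable_id hw
    rw [hindep.integral_fun_mul_eq_mul_integral (measurable_pi_apply 1).aestronglyMeasurable
      (hw.comp (measurable_pi_apply 0)).aestronglyMeasurable, integral_eval,
      integral_comp_eval (μ := fun _ : Fin (m + 2) => γ) hw.aestronglyMeasurable,
      integral_maxDensity, mul_one]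
  calc ∫ x, constraintG m θ x * w (x 0) ∂Measure.pi (fun _ => γ)
      = ∫ x : Fin (m + 2) → ℝ, (cos θ * (x 0 * w (x 0)) + sin θ * (x 1 * w (x 0)))
          ∂Measure.pi (fun _ => γ) := by
        simp only [constraintG]
        congr! 2
        ring
    _ = cos θ * ∫ z : Fin (k + 1) → ℝ, ⨆ i, z i ∂Measure.pi (fun _ => γ)
          + sin θ * ∫ t, t ∂γ := by
        rw [integral_add ((hint 0).const_mul _) ((hint 1).const_mul _), integral_const_mul,
          integral_const_mul, h0, h1]

end IIDCoordinates

lemma prod_gaussianPDFReal_zero_one {ι : Type*} [Fintype ι] (x : ι → ℝ) :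
    ∏ i, gaussianPDFReal 0 1 (x i) =
      (2 * π) ^ (-((Fintype.card ι : ℝ) / 2)) * Real.exp (-(∑ i, (x i) ^ 2) / 2) := by
  have hconst : (√(2 * π))⁻¹ ^ Fintype.card ι = (2 * π) ^ (-((Fintype.card ι : ℝ) / 2)) := by
    rw [Real.sqrt_eq_rpow, ← Real.rpow_neg (by positivity), ← Real.rpow_mul_natCast (by positivity)]
    ring_nf
  simp only [gaussianPDFReal, NNReal.coe_one, mul_one, sub_zero, Finset.prod_mul_distrib,
    Finset.prod_const, Finset.card_univ, ← Real.exp_sum, ← Finset.sum_div, Finset.sum_neg_distrib,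
    hconst]

theorem gaussian_drift_limit_general
    {m lam : ℕ} (hlam : 2 ≤ lam) (θ : ℝ)
    {p : ℝ → ℝ} (hp : Measurable p) (hp_nonneg : ∀ t, 0 ≤ p t)
    {γ : Measure ℝ} [IsProbabilityMeasure γ]
    (hγ : γ = volume.withDensity fun t => ENNReal.ofReal (p t))
    (hγ_int : Integrable id γ)
    {h : (Fin (m + 2) → ℝ) → ℝ} (hdef : ∀ x, h x = ∏ i, p (x i))
    {μ : Measure (Fin (m + 2) → ℝ)} (hμ : μ = volume.withDensity fun x => ENNReal.ofReal (h x))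
    {Emax : ℝ} (hEmax : Emax = ∫ z : Fin lam → ℝ, ⨆ i, z i ∂Measure.pi fun _ => γ) :
    Tendsto (fun δ : ℝ => ∫ x, constraintG m θ x * selectedDensity m θ h μ lam δ x) atTop
      (nhds (Real.cos θ * Emax + Real.sin θ * ∫ t, t ∂γ)) ∧
    ∫ t, t ∂γ < Emax := by
  have : NullSingletonClass γ := hγ ▸ inferInstance
  have hp_int : Integrable p := by
    refine (lintegral_ofReal_ne_top_iff_integrable hp.aestronglyMeasurable
      (ae_of_all _ hp_nonneg)).1 ?_
    rw [← setLIntegral_univ, ← withDensity_apply _ .univ, ← hγ]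
    exact measure_ne_top γ univ
  obtain rfl : h = fun x => ∏ i, p (x i) := funext hdef
  have hpi : μ = Measure.pi fun _ => γ := by
    rw [hμ, hγ]
    exact (pi_withDensity_ofReal (fun _ => hp_int) fun _ => hp_nonneg).symm
  have : IsProbabilityMeasure μ := hpi ▸ inferInstance
  refine ⟨?_, hEmax ▸ integral_lt_integral_iSup_pi γ hγ_int hlam⟩
  have hlim := tendsto_integral_constraintG_mul_selectedDensity (θ := θ) (by fun_prop)
    (fun x => Finset.prod_nonneg fun i _ => hp_nonneg (x i)) hμ
    (hpi ▸ integrable_constraintG_pi hγ_int m θ) lam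
  obtain ⟨k, rfl⟩ : ∃ k, lam = k + 1 := ⟨lam - 1, by lia⟩
  rw [hEmax, ← integral_constraintG_mul_maxDensity hγ_int m]
  simp only [maxDensity, ← measureReal_pi_eval_lt γ (0 : Fin (m + 2)), ← hpi]
  exact hlim

/-- for standard Gaussian steps `μ = N(0, I)` with density `h`,
`∫ g(x) f*_δ(x) dx → cos θ · E[N_{λ:λ}]` as `δ → +∞`, where `N_{λ:λ}` is the maximum of
`λ` i.i.d. standard normal random variables; in particular the limit is positive. -/
theorem gaussian_drift_limit
    {m lam : ℕ} (hlam : 2 ≤ lam) (θ : ℝ) (hθ : θ ∈ Set.Ioo 0 (π / 2))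
    (h : (Fin (m + 2) → ℝ) → ℝ)
    (hdef : ∀ x, h x = (2 * π) ^ (-(((m : ℝ) + 2) / 2)) * Real.exp (-(∑ i, (x i) ^ 2) / 2))
    (μ : Measure (Fin (m + 2) → ℝ)) [IsProbabilityMeasure μ]
    (hμ : μ = volume.withDensity fun x => ENNReal.ofReal (h x))
    (Emax : ℝ)
    (hEmax : Emax = ∫ z : Fin lam → ℝ, (⨆ i : Fin lam, z i)
      ∂(Measure.pi fun _ : Fin lam => gaussianReal 0 1)) :
    Tendsto (fun δ : ℝ => ∫ x, constraintG m θ x * selectedDensity m θ h μ lam δ x) atTop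
      (nhds (Real.cos θ * Emax)) ∧
    0 < Real.cos θ * Emax := by
  have hcos : 0 < Real.cos θ := Real.cos_pos_of_mem_Ioo ⟨by linarith [hθ.1, Real.pi_pos], hθ.2⟩
  have hprod (x) : h x = ∏ i, gaussianPDFReal 0 1 (x i) := by
    simp [hdef, prod_gaussianPDFReal_zero_one]
  obtain ⟨hlim, hpos⟩ := gaussian_drift_limit_general hlam θ (measurable_gaussianPDFReal 0 1)
    (gaussianPDFReal_nonneg 0 1) (gaussianReal_of_var_ne_zero 0 one_ne_zero)
    (memLp_one_iff_integrable.1 (memLp_id_gaussianReal 1)) hprod hμ hEmax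
  rw [integral_id_gaussianReal] at hlim hpos
  exact ⟨by simpa using hlim, mul_pos hcos hpos⟩
end
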